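/- arXiv:2506.05251 — 2 statements merged into one kernel-verified Lean document; each statement's English description precedes it below -/
import Mathlib

section
/- Let {U(S)} be the NTU LP game given by A, {b^i}, and {v^i} on a finite nonempty player set N, with each X({i}) nonempty and bounded. If for every i ∈ N the valuation v^i lies in the dual cone X*(S) for every nonempty coalition S ⊆ N, then the core C(N) is nonempty. -/
open Finset

/-- The design space `X(S)` of a coalition `S` in an NTU LP game. -/
def designSpace {K J N : Type*} [Fintype J] (A : K → J → ℝ) (b : N → K → ℝ)
    (S : Finset N) : Set (J → ℝ) :=
  {x | (∀ j, 0 ≤ x j) ∧ ∀ k, (∑ j, A k j * x j) ≤ ∑ i ∈ S, b i k}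

/-- The utility space `U(S)` of a coalition `S`. -/
def utilitySpace {K J N : Type*} [Fintype J] (A : K → J → ℝ) (b : N → K → ℝ)
    (v : N → J → ℝ) (S : Finset N) : Set (N → ℝ) :=
  {u | ∃ x ∈ designSpace A b S, ∀ i ∈ S, u i ≤ ∑ j, v i j * x j}

/-- The core `C(N) = U(N) \ ⋃_{∅ ≠ S ⊆ N} int U(S)` of an NTU LP game. -/
def core {K J N : Type*} [Fintype J] [Fintype N] (A : K → J → ℝ) (b : N → K → ℝ)
    (v : N → J → ℝ) : Set (N → ℝ) :=
  utilitySpace A b v Finset.univ \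
    ⋃ (S : Finset N) (_ : S.Nonempty), interior (utilitySpace A b v S)

/-!
The game is balanced: if `u` is attained by designs `x S` and `w` is a balancing weight, then
`∑ S, w S • x S` is feasible for the grand coalition, and since a design of a coalition without
player `i` never has negative value for `i`, it gives every player `i` at least `u i`. So Scarf's
theorem applies.

For Scarf's theorem, a parity argument on dominating sets yields a covering theorem of KKM type: if
closed sets `F i` cover the simplex, some point `x` lies in every `F i` with `0 < x i`. Hence every
continuous `g` has a point of the simplex where `g i` is minimal for each `i` with `0 < x i`. Attach
to every point `x` a payoff vector `y x` and weight each coalition by how close it comes to the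
largest improvement over `y x` that any coalition can make; with `g i` the total weight of the
coalitions of player `i`, the complementary point has balancing weights. By balancedness the grand
coalition can then realise that largest improvement up to `ε`, and a compactness argument removes
`ε`.
-/

section Scarf

variable {I E α : Type*} [LinearOrder α] {R : I → E → α}

/-- Scarf's dominating sets for a family of rankings `R i` of the same elements: no element of `E`
lies, in every ranking, strictly above some member of `σ`. -/
def IsDominating (R : I → E → α) (σ : Finset E) : Prop :=
  ∀ y, ∃ i, ∀ x ∈ σ, R i y ≤ R i x

/-- The elements that, in every ranking but the `a`-th, lie strictly above some member of `τ`.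
The elements which complete a facet `τ` of a dominating set are the `R a`-greatest elements of
corners of `τ`. -/
def corner (R : I → E → α) (τ : Finset E) (a : I) : Set E :=
  {y | ∀ i ≠ a, ∃ t ∈ τ, R i t < R i y}

theorem IsDominating.mono {σ τ : Finset E} (hσ : IsDominating R σ) (hτ : τ ⊆ σ) :
    IsDominating R τ := fun y =>
  (hσ y).imp fun _ hi x hx => hi x (hτ hx)

theorem IsDominating.le_of_mem_corner {τ : Finset E} {a : I} {y : E} (hτ : IsDominating R τ)
    (hy : y ∈ corner R τ a) : ∀ t ∈ τ, R a y ≤ R a t := by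
  obtain ⟨i, hi⟩ := hτ y
  obtain rfl : i = a := by
    by_contra hia
    obtain ⟨t, ht, hty⟩ := hy i hia
    exact hty.not_ge (hi t ht)
  exact hi

theorem IsDominating.eq_of_mem_corner {τ : Finset E} {a b : I} {y : E} (hτ : IsDominating R τ)
    (ha : y ∈ corner R τ a) (hb : y ∈ corner R τ b) : a = b := by
  by_contra hab
  obtain ⟨t, ht, hty⟩ := hb a hab
  exact hty.not_ge (hτ.le_of_mem_corner ha t ht)

theorem IsDominating.insert_of_isMaxOn [DecidableEq E] {τ : Finset E} {a : I} {x : E}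
    (hτ : IsDominating R τ) (hx : x ∈ corner R τ a) (hmax : IsMaxOn (R a) (corner R τ a) x) :
    IsDominating R (insert x τ) := by
  intro y
  by_cases hy : y ∈ corner R τ a
  · exact ⟨a, forall_mem_insert _ _ _ |>.2 ⟨hmax hy, hτ.le_of_mem_corner hy⟩⟩
  · simp only [corner, Set.mem_ofPred_eq, not_forall, not_exists, not_and, not_lt] at hy
    obtain ⟨i, hia, hi⟩ := hy
    obtain ⟨t, ht, htx⟩ := hx i hia
    exact ⟨i, forall_mem_insert _ _ _ |>.2 ⟨(hi t ht).trans htx.le, hi⟩⟩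

theorem card_filter_image_erase_eq_two {β γ : Type*} [DecidableEq β] [DecidableEq γ]
    {f : β → γ} {s : Finset β} (h : #s = #(s.image f) + 1) :
    #{a ∈ s | (s.erase a).image f = s.image f} = 2 := by
  obtain ⟨a, ha, b, hb, hab, hfab⟩ :=
    exists_ne_map_eq_of_card_lt_of_maps_to (t := s.image f) (f := f) (by lia)
      fun _ => mem_image_of_mem f
  suffices {x ∈ s | (s.erase x).image f = s.image f} = {a, b} by rw [this, card_pair hab]
  ext x
  simp only [mem_filter, mem_insert, mem_singleton]
  constructor
  · rintro ⟨hx, hxim⟩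
    have hinj : Set.InjOn f (s.erase x) := by
      rw [← card_image_iff, hxim, card_erase_of_mem hx]
      lia
    by_contra! hxab
    exact hab (hinj (mem_coe.2 (mem_erase.2 ⟨hxab.1.symm, ha⟩))
      (mem_coe.2 (mem_erase.2 ⟨hxab.2.symm, hb⟩)) hfab)
  · rintro (rfl | rfl)
    · exact ⟨ha, by grind⟩
    · exact ⟨hb, by grind⟩

section Facet

variable [Fintype I] [DecidableEq I] [DecidableEq E] {μ : I → E}

theorem notMem_image_of_mem_corner {a : I} {x : E}
    (hmin : ∀ i j, R i (μ i) ≤ R i (μ j)) (ha : (univ.erase a).image μ = univ.image μ)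
    (hx : x ∈ corner R (univ.image μ) a) : x ∉ univ.image μ := by
  rw [← ha]
  intro hxμ
  obtain ⟨i, hi, rfl⟩ := mem_image.1 hxμ
  obtain ⟨t, ht, hti⟩ := hx i (ne_of_mem_erase hi)
  obtain ⟨j, -, rfl⟩ := mem_image.1 ht
  exact hti.not_ge (hmin i j)

theorem IsDominating.exists_isMaxOn_of_insert (hR : ∀ i, Function.Injective (R i))
    (hmin : ∀ i j, R i (μ i) ≤ R i (μ j)) (hcard : Fintype.card I = #(univ.image μ) + 1) {x : E}
    (hx : x ∉ univ.image μ) (hdom : IsDominating R (insert x (univ.image μ))) :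
    ∃ a, (univ.erase a).image μ = univ.image μ ∧ x ∈ corner R (univ.image μ) a ∧
      IsMaxOn (R a) (corner R (univ.image μ) a) x := by
  obtain ⟨a, ha⟩ := hdom x
  have hunique : ∀ j, ∃ i ≠ a, μ i = μ j ∧ R i (μ i) < R i x := by
    intro j
    have hj : μ j ∈ insert x (univ.image μ) := by simp
    have hxj : x ≠ μ j := fun h => hx (by simp [h])
    obtain ⟨i, hi⟩ := hdom (μ j)
    have hij : μ i = μ j := hR i ((hmin i j).antisymm (hi _ (by simp)))
    have hix : R i (μ j) < R i x :=
      (hi x (mem_insert_self _ _)).lt_of_ne fun h => hxj (hR i h).symm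
    refine ⟨i, ?_, hij, hij ▸ hix⟩
    rintro rfl
    exact hix.not_ge (ha _ hj)
  have himage : (univ.erase a).image μ = univ.image μ := by
    refine (image_subset_image (erase_subset _ _)).antisymm fun t ht => ?_
    obtain ⟨j, -, rfl⟩ := mem_image.1 ht
    obtain ⟨i, hia, hij, -⟩ := hunique j
    exact mem_image.2 ⟨i, by simpa using hia, hij⟩
  have hinj : Set.InjOn μ (univ.erase a : Finset I) := by
    rw [← card_image_iff, himage, card_erase_of_mem (mem_univ a), card_univ]
    lia
  refine ⟨a, himage, fun i hia => ⟨μ i, by simp, ?_⟩, fun y hy => ?_⟩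
  · obtain ⟨j, hja, hji, hjx⟩ := hunique i
    rwa [← hinj (by simpa using hja) (by simpa using hia) hji]
  · exact (hdom.le_of_mem_corner fun i hia => (hy i hia).imp fun t ht =>
      ⟨mem_insert_of_mem ht.1, ht.2⟩) x (mem_insert_self _ _)

end Facet

open Classical in
theorem IsDominating.card_supersets_eq_two [Fintype I] [Fintype E]
    (hR : ∀ i, Function.Injective (R i)) {τ : Finset E} (hτ : IsDominating R τ)
    (hne : τ.Nonempty) (hcard : Fintype.card I = #τ + 1)
    (hcorner : ∀ a, (corner R τ a).Nonempty) :
    #{σ : Finset E | (#σ = Fintype.card I ∧ IsDominating R σ) ∧ τ ⊆ σ} = 2 := by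
  choose μ hμτ hmin using fun i => exists_min_image τ (R i) hne
  obtain rfl : univ.image μ = τ := by
    refine (image_subset_iff.2 fun i _ => hμτ i).antisymm fun t ht => ?_
    obtain ⟨i, hi⟩ := hτ t
    exact mem_image.2 ⟨i, mem_univ i, hR i ((hmin i t ht).antisymm (hi _ (hμτ i)))⟩
  have hmin' : ∀ i j, R i (μ i) ≤ R i (μ j) := fun i j => hmin i _ (hμτ j)
  choose x hx hmax using fun a =>
    Set.exists_max_image (corner R (univ.image μ) a) (R a) (Set.toFinite _) (hcorner a)
  rw [← card_filter_image_erase_eq_two (f := μ) (s := univ) (by rwa [card_univ])]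
  refine (card_nbij (fun a => insert (x a) (univ.image μ)) ?_ ?_ ?_).symm
  · intro a ha
    have hxa := notMem_image_of_mem_corner hmin' (mem_filter.1 ha).2 (hx a)
    exact mem_filter.2 ⟨mem_univ _, ⟨by rw [card_insert_of_notMem hxa, hcard],
      hτ.insert_of_isMaxOn (hx a) (hmax a)⟩, subset_insert _ _⟩
  · intro a ha b _ hab
    have hxa := notMem_image_of_mem_corner hmin' (mem_filter.1 ha).2 (hx a)
    replace hab : insert (x a) (univ.image μ) = insert (x b) (univ.image μ) := hab
    have hxab : x a = x b := (mem_insert.1 (hab ▸ mem_insert_self (x a) _)).resolve_right hxa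
    exact hτ.eq_of_mem_corner (hx a) (hxab ▸ hx b)
  · intro σ hσ
    obtain ⟨⟨hσcard, hσ⟩, hτσ⟩ := (mem_filter.1 hσ).2
    obtain ⟨z, hz, rfl⟩ := exists_eq_insert_iff.2 ⟨hτσ, by rw [hσcard, hcard]⟩
    obtain ⟨a, ha, hza, hzmax⟩ := hσ.exists_isMaxOn_of_insert hR hmin' hcard hz
    refine ⟨a, by simpa using ha, ?_⟩
    dsimp only
    rw [hR a ((hzmax (hx a)).antisymm (hmax a z hza))]

/-- A family of slack elements `s i`, as in Scarf's lemma: `s i` is the lowest element of the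
ranking `R i`, in which the other slack elements lie above all elements that are not slack. -/
structure IsSlack (R : I → E → α) (s : I → E) : Prop where
  lowest : ∀ i, ∀ e ≠ s i, R i (s i) < R i e
  above : ∀ i, ∀ j ≠ i, ∀ y ∉ Set.range s, R i y < R i (s j)

section Slack

variable {s : I → E}

theorem IsSlack.le (hs : IsSlack R s) (i : I) (e : E) : R i (s i) ≤ R i e := by
  obtain rfl | he := eq_or_ne e (s i)
  exacts [le_rfl, (hs.lowest i e he).le]

theorem IsSlack.corner_nonempty (hs : IsSlack R s) {τ : Finset E} {y : E} (hy : y ∈ τ)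
    (hys : y ∉ Set.range s) (a : I) : (corner R τ a).Nonempty :=
  ⟨s a, fun i hia => ⟨y, hy, hs.above i a hia.symm y hys⟩⟩

theorem IsSlack.isDominating_insert_image_erase_iff [Fintype I] [DecidableEq I] [DecidableEq E]
    (hs : IsSlack R s) (hE : ∃ y, y ∉ Set.range s) {k : I} {x : E}
    (hx : x ∉ (univ.erase k).image s) :
    IsDominating R (insert x ((univ.erase k).image s)) ↔
      x ∉ Set.range s ∧ ∀ y ∉ Set.range s, R k y ≤ R k x := by
  constructor
  · intro hdom
    have hk : ∀ y ∉ Set.range s, ∀ z ∈ insert x ((univ.erase k).image s), R k y ≤ R k z := by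
      intro y hy
      obtain ⟨i, hi⟩ := hdom y
      obtain rfl | hik := eq_or_ne i k
      · exact hi
      · have hsi : s i ∈ insert x ((univ.erase k).image s) :=
          mem_insert_of_mem (mem_image_of_mem s (by simpa using hik))
        exact absurd (hi _ hsi) (hs.lowest i y fun h => hy ⟨i, h.symm⟩).not_ge
    refine ⟨?_, fun y hy => hk y hy x (mem_insert_self _ _)⟩
    rintro ⟨i, rfl⟩
    obtain rfl : i = k := by
      by_contra hik
      exact hx (mem_image_of_mem s (by simpa using hik))
    obtain ⟨y, hy⟩ := hE
    exact (hs.lowest i y fun h => hy ⟨i, h.symm⟩).not_ge (hk y hy _ (mem_insert_self _ _))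
  · rintro ⟨-, hmax⟩ y
    by_cases hy : y ∈ Set.range s
    · obtain ⟨i, rfl⟩ := hy
      exact ⟨i, fun z _ => hs.le i z⟩
    · refine ⟨k, forall_mem_insert _ _ _ |>.2 ⟨hmax y hy, fun z hz => ?_⟩⟩
      obtain ⟨i, hi, rfl⟩ := mem_image.1 hz
      exact (hs.above k i (ne_of_mem_erase hi) y hy).le

open Classical in
theorem IsSlack.card_supersets_image_erase_eq_one [Fintype I] [Fintype E]
    (hR : ∀ i, Function.Injective (R i)) (hs : IsSlack R s) (hE : ∃ y, y ∉ Set.range s) {k : I}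
    (hcard : #((univ.erase k).image s) + 1 = Fintype.card I) :
    #{σ : Finset E | (#σ = Fintype.card I ∧ IsDominating R σ) ∧ (univ.erase k).image s ⊆ σ}
      = 1 := by
  obtain ⟨z, hz, hzmax⟩ := Set.exists_max_image (Set.range s)ᶜ (R k) (Set.toFinite _) hE
  have hzτ : z ∉ (univ.erase k).image s := fun h => hz (by
    obtain ⟨i, -, hi⟩ := mem_image.1 h
    exact ⟨i, hi⟩)
  refine card_eq_one.2 ⟨insert z ((univ.erase k).image s), ?_⟩
  ext σ
  simp only [mem_filter, mem_univ, true_and, mem_singleton]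
  constructor
  · rintro ⟨⟨hσcard, hσ⟩, hτσ⟩
    obtain ⟨x, hx, rfl⟩ := exists_eq_insert_iff.2 ⟨hτσ, by rw [hσcard, hcard]⟩
    obtain ⟨hxs, hxmax⟩ := (hs.isDominating_insert_image_erase_iff hE hx).1 hσ
    rw [hR k ((hzmax x hxs).antisymm (hxmax z hz))]
  · rintro rfl
    exact ⟨⟨by rw [card_insert_of_notMem hzτ, hcard],
      (hs.isDominating_insert_image_erase_iff hE hzτ).2 ⟨hz, hzmax⟩⟩, subset_insert _ _⟩

end Slack

theorem even_card_facets_of_image_ne_univ [Fintype I] [DecidableEq I] [Fintype E]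
    [DecidableEq E] (c : E → I) (k : I) {σ : Finset E} (hσ : #σ = Fintype.card I)
    (hc : σ.image c ≠ univ) :
    Even #{τ : Finset E | (#τ + 1 = Fintype.card I ∧ τ.image c = univ.erase k) ∧ τ ⊆ σ} := by
  have hfacets : #{τ : Finset E | (#τ + 1 = Fintype.card I ∧ τ.image c = univ.erase k) ∧ τ ⊆ σ}
      = #{x ∈ σ | (σ.erase x).image c = univ.erase k} := by
    refine (card_nbij (fun x => σ.erase x) (fun x hx => ?_) (fun x hx y hy hxy => ?_)
      fun τ hτ => ?_).symm
    · obtain ⟨hxσ, hxc⟩ := mem_filter.1 hx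
      exact mem_filter.2 ⟨mem_univ _, ⟨by rw [card_erase_add_one hxσ, hσ], hxc⟩, erase_subset _ _⟩
    · exact erase_injOn σ (mem_filter.1 hx).1 (mem_filter.1 hy).1 hxy
    · obtain ⟨⟨hτcard, hτc⟩, hτσ⟩ := (mem_filter.1 hτ).2
      obtain ⟨x, hx, rfl⟩ := exists_eq_insert_iff.2 ⟨hτσ, by rw [hτcard, hσ]⟩
      exact ⟨x, mem_filter.2 ⟨mem_insert_self _ _, by rwa [erase_insert hx]⟩, erase_insert hx⟩
  rw [hfacets]
  by_cases hσc : σ.image c = univ.erase k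
  · rw [← hσc, card_filter_image_erase_eq_two]
    · exact even_two
    · rw [hσc, card_erase_add_one (mem_univ k), card_univ, hσ]
  · rw [filter_false_of_mem, card_empty]
    · exact Even.zero
    · intro x _ hx
      have hsub : univ.erase k ⊆ σ.image c := hx ▸ image_subset_image (erase_subset _ _)
      by_cases hk : k ∈ σ.image c
      · exact hc (eq_univ_of_forall fun i => by
          obtain rfl | hik := eq_or_ne i k
          exacts [hk, hsub (by simpa using hik)])
      · exact hσc ((subset_erase.2 ⟨subset_univ _, hk⟩).antisymm hsub)

theorem exists_mem_notMem_range_of_image_eq [DecidableEq I] [DecidableEq E] {s : I → E} {c : E → I}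
    (hc : ∀ i, c (s i) = i) {τ : Finset E} {t : Finset I} (hτ : τ.image c = t)
    (hne : τ ≠ t.image s) : ∃ y ∈ τ, y ∉ Set.range s := by
  by_contra! hτs
  refine hne ?_
  rw [← hτ, image_image, image_congr (g := id), image_id]
  intro y hy
  obtain ⟨i, rfl⟩ := hτs y hy
  exact congrArg s (hc i)

section Colorful

variable [Nonempty I] [Finite E] {s : I → E} {c : E → I}

-- Double counting of the pairs `τ ⊆ σ`, with `σ` dominating of full size and `τ` missing exactly
-- the colour `k`: the facet `s '' {k}ᶜ` lies in one such `σ`, every other facet in zero or two.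
open Classical in
theorem IsSlack.exists_colorful_of_injective [Fintype I] (hR : ∀ i, Function.Injective (R i))
    (hs : IsSlack R s) (hE : ∃ y, y ∉ Set.range s) (hc : ∀ i, c (s i) = i) :
    ∃ σ : Finset E, IsDominating R σ ∧ σ.image c = univ := by
  have := Fintype.ofFinite E
  by_contra! hcolorful
  obtain ⟨k⟩ := ‹Nonempty I›
  let rooms : Finset (Finset E) := {σ | #σ = Fintype.card I ∧ IsDominating R σ}
  let doors : Finset (Finset E) := {τ | #τ + 1 = Fintype.card I ∧ τ.image c = univ.erase k}
  have hrooms : Even (∑ σ ∈ rooms, #(bipartiteBelow (· ⊆ ·) doors σ)) := even_sum _ fun σ hσ => by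
    obtain ⟨-, hσcard, hσ⟩ := mem_filter.1 hσ
    rw [bipartiteBelow, filter_filter]
    exact even_card_facets_of_image_ne_univ c k hσcard (hcolorful σ hσ)
  have hcimage : ((univ.erase k).image s).image c = univ.erase k := by
    simp [image_image, Function.comp_def, hc]
  have hcard : #((univ.erase k).image s) + 1 = Fintype.card I := by
    rw [card_image_of_injective _ (Function.LeftInverse.injective hc),
      card_erase_add_one (mem_univ k), card_univ]
  have hdoors : {τ ∈ doors | Odd #(bipartiteAbove (· ⊆ ·) rooms τ)} = {(univ.erase k).image s} := by
    ext τ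
    rw [mem_filter, mem_singleton, bipartiteAbove, filter_filter]
    constructor
    · rintro ⟨hτ, hodd⟩
      obtain ⟨-, hτcard, hτc⟩ := mem_filter.1 hτ
      by_contra hne
      obtain ⟨y, hyτ, hys⟩ := exists_mem_notMem_range_of_image_eq hc hτc hne
      obtain ⟨σ, hσ⟩ := card_pos.1 hodd.pos
      have hτdom : IsDominating R τ := (mem_filter.1 hσ).2.1.2.mono (mem_filter.1 hσ).2.2
      rw [hτdom.card_supersets_eq_two hR ⟨y, hyτ⟩ hτcard.symm (hs.corner_nonempty hyτ hys)] at hodd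
      exact absurd hodd (by decide)
    · rintro rfl
      refine ⟨mem_filter.2 ⟨mem_univ _, hcard, hcimage⟩, ?_⟩
      rw [hs.card_supersets_image_erase_eq_one hR hE hcard]
      exact odd_one
  rw [← sum_card_bipartiteAbove_eq_sum_card_bipartiteBelow, ← Nat.not_odd_iff_even,
    odd_sum_iff_odd_card_odd, hdoors, card_singleton] at hrooms
  exact hrooms odd_one

theorem IsSlack.exists_colorful [Finite I] (hs : IsSlack R s) (hE : ∃ y, y ∉ Set.range s)
    (hc : ∀ i, c (s i) = i) :
    ∃ σ : Finset E, IsDominating R σ ∧ ∀ i, ∃ x ∈ σ, c x = i := by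
  have := Fintype.ofFinite I
  classical
  let rank : I → E → α ×ₗ Fin (Nat.card E) := fun i e => toLex (R i e, Finite.equivFin E e)
  have hinj : ∀ i, Function.Injective (rank i) := fun i e e' h =>
    (Finite.equivFin E).injective (Prod.ext_iff.1 (toLex.injective h)).2
  have hrank : IsSlack rank s :=
    ⟨fun i e he => Prod.Lex.toLex_lt_toLex.2 (.inl (hs.lowest i e he)),
      fun i j hj y hy => Prod.Lex.toLex_lt_toLex.2 (.inl (hs.above i j hj y hy))⟩
  obtain ⟨σ, hσ, hσc⟩ := hrank.exists_colorful_of_injective hinj hE hc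
  refine ⟨σ, fun y => ?_, fun i => ?_⟩
  · exact (hσ y).imp fun i hi x hx => Prod.Lex.monotone_fst _ _ (hi x hx)
  · simpa using hσc.ge (mem_univ i)

end Colorful

end Scarf

section Simplex

variable {I : Type*} [Fintype I]

theorem lt_sum_add_one_of_forall_exists_le [Nonempty I] {m : ℕ} {μ : I → ℕ} {C : Finset I}
    (h : ∀ y : I → ℕ, ∑ i, y i = m → ∃ i ∈ C, y i ≤ μ i) : m < ∑ i ∈ C, (μ i + 1) := by
  classical
  by_contra! hle
  obtain ⟨a⟩ := ‹Nonempty I›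
  obtain ⟨i, hi, hiμ⟩ := h ((fun i => if i ∈ C then μ i + 1 else 0) +
    Pi.single a (m - ∑ i ∈ C, (μ i + 1))) (by
      simp only [Pi.add_apply]
      rw [sum_add_distrib, sum_ite_mem, univ_inter, sum_pi_single', if_pos (mem_univ a),
        add_tsub_cancel_of_le hle])
  simp only [Pi.add_apply, if_pos hi] at hiμ
  lia

theorem lt_add_card_of_lt_sum_add_one {m : ℕ} {x μ : I → ℕ} {C : Finset I} (hx : ∑ i, x i = m)
    (hμx : ∀ i ∈ C, μ i ≤ x i) (hC : m < ∑ i ∈ C, (μ i + 1)) (k : I) :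
    k ∉ C ∧ x k < #C ∨ k ∈ C ∧ x k < μ k + #C := by
  classical
  have hsum : x k + ∑ i ∈ C.erase k, μ i ≤ m := calc
    x k + ∑ i ∈ C.erase k, μ i ≤ x k + ∑ i ∈ C.erase k, x i := by
      gcongr with i hi
      exact hμx i (mem_of_mem_erase hi)
    _ = ∑ i ∈ insert k (C.erase k), x i := (sum_insert (notMem_erase k C)).symm
    _ ≤ ∑ i, x i := sum_le_sum_of_subset (subset_univ _)
    _ = m := hx
  rw [sum_add_distrib, sum_const, smul_eq_mul, mul_one] at hC
  by_cases hk : k ∈ C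
  · rw [← add_sum_erase _ _ hk] at hC
    exact .inr ⟨hk, by lia⟩
  · rw [erase_eq_of_notMem hk] at hsum
    exact .inl ⟨hk, by lia⟩

theorem exists_colorful_grid_dominating [Nonempty I] (m : ℕ) (c : (I → ℕ) → I) :
    ∃ (D : Finset (I → ℕ)) (C : Finset I), (∀ x ∈ D, ∑ i, x i = m) ∧
      (∀ i ∈ C, ∃ x ∈ D, c x = i) ∧
      ∀ y : I → ℕ, ∑ i, y i = m → ∃ i ∈ C, ∀ x ∈ D, y i ≤ x i := by
  classical
  let R : I → (piAntidiag (univ : Finset I) m) ⊕ I → ℕ := fun i =>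
    Sum.elim (fun x => x.1 i + 1) fun j => if j = i then 0 else m + 2
  have hR : IsSlack R Sum.inr := by
    constructor
    · rintro i (x | j) h
      · simp [R]
      · simp_all [R]
    · rintro i j hji (⟨x, hx⟩ | k) hxs
      · have hxm : x i ≤ m :=
          (single_le_sum (fun _ _ => Nat.zero_le _) (mem_univ i)).trans_eq (mem_piAntidiag.1 hx).1
        simp only [R, Sum.elim_inl, Sum.elim_inr, if_neg hji]
        lia
      · exact absurd ⟨k, rfl⟩ hxs
  obtain ⟨a⟩ := ‹Nonempty I›
  obtain ⟨σ, hσ, hcol⟩ := hR.exists_colorful (c := Sum.elim (fun x => c x.1) id)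
    ⟨Sum.inl ⟨Pi.single a m, by simp⟩, by simp⟩ fun i => rfl
  refine ⟨σ.toLeft.map (Function.Embedding.subtype _), ({i | Sum.inr i ∉ σ} : Finset I), ?_, ?_, ?_⟩
  · intro x hx
    obtain ⟨z, -, rfl⟩ := mem_map.1 hx
    exact (mem_piAntidiag.1 z.2).1
  · intro i hi
    obtain ⟨z | j, hz, hzi⟩ := hcol i
    · exact ⟨z, mem_map_of_mem _ (mem_toLeft.2 hz), hzi⟩
    · obtain rfl : j = i := hzi
      exact absurd hz (mem_filter.1 hi).2
  · intro y hy
    obtain ⟨i, hi⟩ := hσ (Sum.inl ⟨y, mem_piAntidiag.2 ⟨hy, by simp⟩⟩)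
    refine ⟨i, mem_filter.2 ⟨mem_univ i, fun his => by simpa [R] using hi (.inr i) his⟩, ?_⟩
    intro x hx
    obtain ⟨z, hz, rfl⟩ := mem_map.1 hx
    simpa [R] using hi _ (mem_toLeft.1 hz)

theorem exists_grid_cell [Nonempty I] (m : ℕ) (c : (I → ℕ) → I) :
    ∃ D : Finset (I → ℕ), D.Nonempty ∧ (∀ x ∈ D, ∑ i, x i = m) ∧
      (∀ x ∈ D, ∀ y ∈ D, ∀ k, x k ≤ y k + Fintype.card I) ∧
      ∀ i, (∃ x ∈ D, c x = i) ∨ ∀ x ∈ D, x i ≤ Fintype.card I := by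
  classical
  obtain ⟨D, C, hD, hcol, hdom⟩ := exists_colorful_grid_dominating m c
  obtain ⟨a⟩ := ‹Nonempty I›
  have hC : C.Nonempty := (hdom (Pi.single a m) (by simp)).imp fun i hi => hi.1
  have hDne : D.Nonempty := hC.elim fun i hi => (hcol i hi).imp fun x hx => hx.1
  choose x hxD hmin using fun i => exists_min_image D (· i) hDne
  have hsum := lt_sum_add_one_of_forall_exists_le (μ := fun i => x i i) fun y hy =>
    (hdom y hy).imp fun i hi => ⟨hi.1, hi.2 _ (hxD i)⟩
  have hle := fun y hy => lt_add_card_of_lt_sum_add_one (hD y hy) (fun i _ => hmin i y hy) hsum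
  have hcard := card_le_univ C
  refine ⟨D, hDne, hD, fun y hy z hz k => ?_, fun i => ?_⟩
  · have := hmin k z hz
    obtain ⟨-, h⟩ | ⟨-, h⟩ := hle y hy k <;> lia
  · by_cases hi : i ∈ C
    · exact .inl (hcol i hi)
    · refine .inr fun y hy => ?_
      obtain ⟨-, h⟩ | ⟨h, -⟩ := hle y hy i
      · lia
      · exact absurd h hi

theorem exists_mem_stdSimplex_cthickening {F : I → Set (I → ℝ)} [Nonempty I]
    (hcov : stdSimplex ℝ I ⊆ ⋃ i, F i) {ε : ℝ} (hε : 0 < ε) :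
    ∃ x ∈ stdSimplex ℝ I, ∀ i, x i ≤ ε ∨ x ∈ Metric.cthickening ε (F i) := by
  obtain ⟨m, hm⟩ := exists_nat_gt (Fintype.card I / ε)
  have hm0 : (0 : ℝ) < m := (by positivity : (0 : ℝ) ≤ Fintype.card I / ε).trans_lt hm
  have hcard : (Fintype.card I : ℝ) / m ≤ ε := by
    rw [div_lt_iff₀ hε] at hm
    rw [div_le_iff₀ hm0]
    linarith
  let p : (I → ℕ) → I → ℝ := fun x i => x i / m
  have hp : ∀ x : I → ℕ, ∑ i, x i = m → p x ∈ stdSimplex ℝ I := fun x hx =>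
    ⟨fun i => by positivity, by
      rw [← sum_div, ← Nat.cast_sum, hx, div_self hm0.ne']⟩
  have hF : ∀ x : I → ℕ, ∃ i, ∑ i, x i = m → p x ∈ F i := fun x => by
    by_cases hx : ∑ i, x i = m
    · exact (Set.mem_iUnion.1 (hcov (hp x hx))).imp fun i hi _ => hi
    · exact ⟨Classical.arbitrary I, fun h => absurd h hx⟩
  choose c hc using hF
  obtain ⟨D, ⟨x, hx⟩, hD, hdiam, hcol⟩ := exists_grid_cell m c
  have hle : ∀ {k l : ℕ}, k ≤ l + Fintype.card I → (k : ℝ) / m ≤ l / m + ε := fun {k l} h => calc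
    (k : ℝ) / m ≤ (l + Fintype.card I : ℕ) / m := by gcongr
    _ = l / m + Fintype.card I / m := by rw [Nat.cast_add, add_div]
    _ ≤ l / m + ε := by gcongr
  refine ⟨p x, hp x (hD x hx), fun i => ?_⟩
  obtain ⟨y, hy, rfl⟩ | hi := hcol i
  · refine .inr (Metric.mem_cthickening_of_dist_le _ _ _ _ (hc y (hD y hy)) ?_)
    refine (dist_pi_le_iff hε.le).2 fun k => abs_le.2 ⟨?_, ?_⟩
    · linarith [hle (hdiam y hy x hx k)]
    · linarith [hle (hdiam x hx y hy k)]
  · exact .inl (by simpa using hle (l := 0) (by simpa using hi x hx))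

theorem exists_forall_pos_mem_of_isClosed_cover [Nonempty I] {F : I → Set (I → ℝ)}
    (hF : ∀ i, IsClosed (F i)) (hcov : stdSimplex ℝ I ⊆ ⋃ i, F i) :
    ∃ x ∈ stdSimplex ℝ I, ∀ i, 0 < x i → x ∈ F i := by
  let G : Set.Ioi (0 : ℝ) → Set (I → ℝ) := fun ε =>
    stdSimplex ℝ I ∩ ⋂ i, ({x | x i ≤ ε} ∪ Metric.cthickening ε (F i))
  have hGclosed : ∀ ε, IsClosed (G ε) := fun ε =>
    (isClosed_stdSimplex ℝ I).inter <| isClosed_iInter fun i =>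
      (isClosed_le (continuous_apply i) continuous_const).union Metric.isClosed_cthickening
  have hGmono : Monotone G := fun ε δ hεδ => Set.inter_subset_inter_right _ <|
    Set.iInter_mono fun i => Set.union_subset_union (fun x (hx : x i ≤ ε) => hx.trans hεδ)
      (Metric.cthickening_mono hεδ _)
  obtain ⟨x, hx⟩ := IsCompact.nonempty_iInter_of_directed_nonempty_isCompact_isClosed G
    hGmono.directed_ge
    (fun ε => (exists_mem_stdSimplex_cthickening hcov ε.2).imp fun x hx =>
      ⟨hx.1, Set.mem_iInter.2 hx.2⟩)
    (fun ε => (isCompact_stdSimplex ℝ I).of_isClosed_subset (hGclosed ε) Set.inter_subset_left)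
    hGclosed
  rw [Set.mem_iInter] at hx
  refine ⟨x, (hx ⟨1, Set.mem_Ioi.2 one_pos⟩).1, fun i hi => ?_⟩
  rw [← (hF i).closure_eq, Metric.closure_eq_iInter_cthickening' _ (Set.Ioo 0 (x i))]
  · refine Set.mem_iInter₂.2 fun ε hε => ?_
    exact (Set.mem_iInter.1 (hx ⟨ε, hε.1⟩).2 i).resolve_left hε.2.not_ge
  · intro δ hδ
    obtain ⟨ε, hε, hεδ⟩ := exists_between (lt_min hδ hi)
    exact ⟨ε, ⟨hε, hεδ.trans_le (min_le_right _ _)⟩, hε, hεδ.le.trans (min_le_left _ _)⟩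

theorem exists_complementary_of_continuous [Nonempty I] {g : (I → ℝ) → I → ℝ}
    (hg : Continuous g) :
    ∃ x ∈ stdSimplex ℝ I, ∀ i, 0 < x i → ∀ j, g x i ≤ g x j := by
  refine exists_forall_pos_mem_of_isClosed_cover (F := fun i => {x | ∀ j, g x i ≤ g x j})
    (fun i => ?_) fun x _ => ?_
  · rw [Set.ofPred_forall]
    exact isClosed_iInter fun j => isClosed_le (by fun_prop) (by fun_prop)
  · exact Set.mem_iUnion.2 (Finite.exists_min (g x))

end Simplex

section Surplus

variable {N : Type*} {V : Set (N → ℝ)} {u : N → ℝ} {i : N}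

/-- The most that the payoff vector `u` can be raised, by the same amount for every player, without
leaving `V`; it is negative if `u` must be lowered to reach `V`. -/
noncomputable def surplus (V : Set (N → ℝ)) (u : N → ℝ) : ℝ :=
  sSup {t | (u + fun _ => t) ∈ V}

theorem le_surplus_iff [Finite N] (hlower : IsLowerSet V) (hclosed : IsClosed V)
    (hne : V.Nonempty) (hbdd : BddAbove ((· i) '' V)) {t : ℝ} :
    t ≤ surplus V u ↔ (u + fun _ => t) ∈ V := by
  have hmono : ∀ {s t : ℝ}, s ≤ t → (u + fun _ => t) ∈ V → (u + fun _ => s) ∈ V := fun hst =>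
    hlower fun j => by simpa using hst
  have hTne : {t | (u + fun _ => t) ∈ V}.Nonempty := by
    obtain ⟨w, hw⟩ := hne
    obtain ⟨t, ht⟩ := (Set.finite_range (w - u)).bddBelow
    exact ⟨t, hlower (fun j => by simpa using add_le_of_le_sub_left (ht ⟨j, rfl⟩)) hw⟩
  have hTbdd : BddAbove {t | (u + fun _ => t) ∈ V} := by
    obtain ⟨B, hB⟩ := hbdd
    exact ⟨B - u i, fun t ht => le_sub_iff_add_le'.2 (hB ⟨_, ht, rfl⟩)⟩
  have hTclosed : IsClosed {t | (u + fun _ => t) ∈ V} := hclosed.preimage (by fun_prop)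
  exact ⟨fun h => hmono h (hTclosed.csSup_mem hTne hTbdd), fun h => le_csSup hTbdd h⟩

theorem continuous_surplus [Finite N] (hlower : IsLowerSet V) (hclosed : IsClosed V)
    (hne : V.Nonempty) (hbdd : BddAbove ((· i) '' V)) : Continuous (surplus V) := by
  have := Fintype.ofFinite N
  refine (LipschitzWith.of_le_add fun u w => ?_).continuous
  rw [← sub_le_iff_le_add, le_surplus_iff hlower hclosed hne hbdd]
  refine hlower (fun j => ?_) ((le_surplus_iff hlower hclosed hne hbdd).1 (le_refl (surplus V u)))
  have := (abs_le.1 (dist_le_pi_dist u w j)).1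
  simp only [Pi.add_apply]
  linarith

end Surplus

section Game

variable {N : Type*}

/-- The nonempty coalitions of players in `N`. -/
abbrev Coalition (N : Type*) := {S : Finset N // S.Nonempty}

/-- The coalition of the player `i` alone. -/
def Coalition.single (i : N) : Coalition N := ⟨{i}, singleton_nonempty i⟩

/-- The coalition of all players. -/
def Coalition.grand (N : Type*) [Fintype N] [Nonempty N] : Coalition N := ⟨univ, univ_nonempty⟩

instance [Nonempty N] : Nonempty (Coalition N) := ‹Nonempty N›.map Coalition.single

open Classical in
/-- Nonnegative weights on the coalitions that add up to `1` over the coalitions of any given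
player. The coalitions of positive weight form a balanced family. -/
structure IsBalancingWeight [Fintype N] (w : Coalition N → ℝ) : Prop where
  nonneg : ∀ S, 0 ≤ w S
  sum_eq_one : ∀ i, ∑ S with i ∈ S.1, w S = 1

open Classical in
theorem exists_sum_weights_eq [Fintype N] [Nonempty N] {w : Coalition N → (N → ℝ) → ℝ}
    (hw : ∀ S, Continuous (w S)) (hnonneg : ∀ S x, 0 ≤ w S x)
    (hpos : ∀ x ∈ stdSimplex ℝ N, ∃ S, 0 < w S x)
    (hface : ∀ x ∈ stdSimplex ℝ N, ∀ S, 0 < w S x → ∀ i ∈ S.1, 0 < x i) :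
    ∃ x ∈ stdSimplex ℝ N, ∃ r > 0, ∀ i, ∑ S with i ∈ S.1, w S x = r := by
  have hcont : Continuous fun (x : N → ℝ) (i : N) => ∑ S : Coalition N with i ∈ S.1, w S x := by
    fun_prop
  obtain ⟨x, hx, hmin⟩ := exists_complementary_of_continuous hcont
  have hsum_pos : ∀ {i}, 0 < ∑ S with i ∈ S.1, w S x → 0 < x i := fun h => by
    obtain ⟨S, hS, hwS⟩ := exists_lt_of_sum_lt (sum_const_zero.trans_lt h)
    exact hface x hx S hwS _ (mem_filter.1 hS).2
  obtain ⟨S, hS⟩ := hpos x hx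
  obtain ⟨a, ha⟩ := S.2
  have hr : 0 < ∑ T with a ∈ T.1, w T x :=
    sum_pos' (fun T _ => hnonneg T x) ⟨S, mem_filter.2 ⟨mem_univ S, ha⟩, hS⟩
  have hle := hmin a (hsum_pos hr)
  exact ⟨x, hx, _, hr, fun i => (hmin i (hsum_pos (hr.trans_le (hle i))) a).antisymm (hle i)⟩

theorem exists_balancingWeight [Fintype N] [Nonempty N] {h : Coalition N → (N → ℝ) → ℝ}
    (hh : ∀ S, Continuous (h S)) {ε : ℝ} (hε : 0 < ε)
    (hface : ∀ x ∈ stdSimplex ℝ N, ∀ S, (∀ T, h T x < h S x + ε) → ∀ i ∈ S.1, 0 < x i) :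
    ∃ x ∈ stdSimplex ℝ N, ∃ w : Coalition N → ℝ, IsBalancingWeight w ∧
      ∀ S, 0 < w S → ∀ T, h T x < h S x + ε := by
  classical
  let H : (N → ℝ) → ℝ := fun x => univ.sup' univ_nonempty fun S => h S x
  have hH : Continuous H := Continuous.finset_sup'_apply _ fun S _ => hh S
  have hpos_iff : ∀ S x, 0 < max 0 (h S x + ε - H x) ↔ ∀ T, h T x < h S x + ε := fun S x => by
    simp [H]
  obtain ⟨x, hx, r, hr, hsum⟩ := exists_sum_weights_eq
    (w := fun S x => max 0 (h S x + ε - H x)) (fun S => by fun_prop) (fun S x => le_max_left _ _)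
    (fun x _ => by
      obtain ⟨S, hS⟩ := Finite.exists_max fun S => h S x
      exact ⟨S, (hpos_iff S x).2 fun T => (hS T).trans_lt (lt_add_of_pos_right _ hε)⟩)
    fun x hx S hS => hface x hx S ((hpos_iff S x).1 hS)
  refine ⟨x, hx, fun S => max 0 (h S x + ε - H x) / r,
    ⟨fun S => by positivity, fun i => ?_⟩, fun S hS => ?_⟩
  · rw [← sum_div, hsum i, div_self hr.ne']
  · exact (hpos_iff S x).1 ((div_pos_iff_of_pos_right hr).1 hS)

/-- A game with nontransferable utility: the payoff vectors `V S` that a coalition `S` can attain.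
Whether `u` lies in `V S` depends on the coordinates in `S` only. -/
structure IsNTUGame (V : Coalition N → Set (N → ℝ)) : Prop where
  nonempty : ∀ S, (V S).Nonempty
  isClosed : ∀ S, IsClosed (V S)
  mem_of_le : ∀ S, ∀ u ∈ V S, ∀ u', (∀ i ∈ S.1, u' i ≤ u i) → u' ∈ V S
  bddAbove : ∀ S, ∀ i ∈ S.1, BddAbove ((· i) '' V S)

/-- Balancedness in the sense of Scarf: whatever all coalitions of a balanced family can attain, the
grand coalition can attain as well. -/
def IsBalanced [Fintype N] [Nonempty N] (V : Coalition N → Set (N → ℝ)) : Prop :=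
  ∀ w : Coalition N → ℝ, IsBalancingWeight w →
    ∀ u, (∀ S, 0 < w S → u ∈ V S) → u ∈ V (Coalition.grand N)

namespace IsNTUGame

variable {V : Coalition N → Set (N → ℝ)}

theorem isLowerSet (hV : IsNTUGame V) (S : Coalition N) : IsLowerSet (V S) :=
  fun u u' hle hu => hV.mem_of_le S u hu u' fun i _ => hle i

theorem le_surplus_iff [Finite N] (hV : IsNTUGame V) {S : Coalition N} {u : N → ℝ} {t : ℝ} :
    t ≤ surplus (V S) u ↔ (u + fun _ => t) ∈ V S :=
  S.2.elim fun i hi =>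
    _root_.le_surplus_iff (hV.isLowerSet S) (hV.isClosed S) (hV.nonempty S) (hV.bddAbove S i hi)

theorem continuous_surplus [Finite N] (hV : IsNTUGame V) (S : Coalition N) :
    Continuous (surplus (V S)) :=
  S.2.elim fun i hi =>
    _root_.continuous_surplus (hV.isLowerSet S) (hV.isClosed S) (hV.nonempty S)
      (hV.bddAbove S i hi)

theorem exists_mem_single_iff [Finite N] (hV : IsNTUGame V) :
    ∃ r : N → ℝ, ∀ i u, u ∈ V (Coalition.single i) ↔ u i ≤ r i := by
  refine ⟨fun i => surplus (V (Coalition.single i)) 0, fun i u => ?_⟩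
  rw [hV.le_surplus_iff, zero_add]
  constructor <;> intro hu <;> refine hV.mem_of_le _ _ hu _ fun j hj => ?_ <;>
    rw [mem_singleton.1 hj]

theorem exists_le_add [Finite N] (hV : IsNTUGame V) (r : N → ℝ) :
    ∃ B ≥ 0, ∀ S, ∀ u ∈ V S, ∀ i ∈ S.1, u i ≤ r i + B := by
  choose! f hf using hV.bddAbove
  obtain ⟨B, hB⟩ := (Set.finite_range fun p : Coalition N × N => f p.1 p.2 - r p.2).bddAbove
  refine ⟨max B 0, le_max_right _ _, fun S u hu i hi => ?_⟩
  have hui : u i ≤ f S i := hf S i hi ⟨u, hu, rfl⟩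
  have hfi : f S i - r i ≤ B := hB ⟨(S, i), rfl⟩
  linarith [le_max_left B 0]

theorem notMem_interior_of_surplus_le [Finite N] (hV : IsNTUGame V) {S : Coalition N} {u : N → ℝ}
    {t : ℝ} (ht : surplus (V S) u ≤ t) : (u + fun _ => t) ∉ interior (V S) := by
  intro hu
  have hcont : Continuous fun s : ℝ => u + fun _ => s := by fun_prop
  obtain ⟨s, hts, hs⟩ :=
    Filter.Eventually.exists_gt (hcont.continuousAt (mem_interior_iff_mem_nhds.1 hu))
  exact (hts.trans_le (hV.le_surplus_iff.2 hs)).not_ge ht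

variable [Fintype N] [Nonempty N]

-- In `y x` every player gets the stand-alone payoff `r i`, lowered in proportion to `x i`. The
-- slope is so large that some single player could gain more alone than any coalition that contains
-- a player `j` with `x j = 0`, who gets `r j` in full.
theorem exists_continuous_payoff (hV : IsNTUGame V) :
    ∃ y : (N → ℝ) → N → ℝ, Continuous y ∧ ∀ x ∈ stdSimplex ℝ N, ∀ S,
      (∀ T, surplus (V T) (y x) < surplus (V S) (y x) + 1) → ∀ i ∈ S.1, 0 < x i := by
  obtain ⟨r, hr⟩ := hV.exists_mem_single_iff
  obtain ⟨B, hB, hrB⟩ := hV.exists_le_add r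
  let L : ℝ := Fintype.card N * (B + 1)
  let y : (N → ℝ) → N → ℝ := fun x i => r i - L * x i
  refine ⟨y, by fun_prop, fun x hx S hS i hi => (hx.1 i).lt_of_ne' fun hxi => ?_⟩
  obtain ⟨a, -, ha⟩ : ∃ a ∈ univ, (Fintype.card N : ℝ)⁻¹ ≤ x a :=
    exists_le_of_sum_le univ_nonempty (by simp [hx.2])
  have hsingle : B + 1 ≤ surplus (V (Coalition.single a)) (y x) := by
    rw [hV.le_surplus_iff, hr]
    have hL : B + 1 ≤ L * x a := calc
      B + 1 = L * (Fintype.card N : ℝ)⁻¹ := by simp [L]; field_simp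
      _ ≤ L * x a := by gcongr
    simp only [Pi.add_apply, y]
    linarith
  have hBS : surplus (V S) (y x) ≤ B := by
    have := hrB S _ (hV.le_surplus_iff.1 (le_refl (surplus (V S) (y x)))) i hi
    simp only [Pi.add_apply, y, hxi] at this
    linarith
  linarith [hS (Coalition.single a)]

theorem exists_surplus_le_surplus_grand_add (hV : IsNTUGame V) (hbal : IsBalanced V)
    {y : (N → ℝ) → N → ℝ} (hy : Continuous y)
    (hface : ∀ x ∈ stdSimplex ℝ N, ∀ S,
      (∀ T, surplus (V T) (y x) < surplus (V S) (y x) + 1) → ∀ i ∈ S.1, 0 < x i)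
    {ε : ℝ} (hε : 0 < ε) :
    ∃ x ∈ stdSimplex ℝ N, ∀ S,
      surplus (V S) (y x) ≤ surplus (V (Coalition.grand N)) (y x) + ε := by
  obtain ⟨x, hx, w, hw, hS⟩ := exists_balancingWeight
    (h := fun S x => surplus (V S) (y x)) (fun S => (hV.continuous_surplus S).comp hy)
    (lt_min hε one_pos) fun x hx S hS =>
      hface x hx S fun T => (hS T).trans_le (by gcongr; exact min_le_right _ _)
  refine ⟨x, hx, fun T => ?_⟩
  rw [← sub_le_iff_le_add, hV.le_surplus_iff]
  refine hbal w hw _ fun S hwS => hV.le_surplus_iff.1 ?_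
  linarith [hS S hwS T, min_le_left ε 1]

theorem exists_surplus_le_surplus_grand (hV : IsNTUGame V) (hbal : IsBalanced V) :
    ∃ u, ∀ S, surplus (V S) u ≤ surplus (V (Coalition.grand N)) u := by
  obtain ⟨y, hy, hface⟩ := hV.exists_continuous_payoff
  have hcont : ∀ S, Continuous fun x => surplus (V S) (y x) := fun S =>
    (hV.continuous_surplus S).comp hy
  obtain ⟨x, -, hx⟩ := (isCompact_stdSimplex ℝ N).exists_isMinOn
    (Set.nonempty_coe_sort.1 inferInstance)
    (f := fun x => univ.sup' univ_nonempty (fun S => surplus (V S) (y x)) -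
      surplus (V (Coalition.grand N)) (y x))
    ((Continuous.finset_sup'_apply _ fun S _ => hcont S).sub (hcont _)).continuousOn
  refine ⟨y x, fun S => le_of_forall_pos_le_add fun ε hε => ?_⟩
  obtain ⟨z, hz, hzε⟩ := hV.exists_surplus_le_surplus_grand_add hbal hy hface hε
  have hxz := isMinOn_iff.1 hx z hz
  have hzsup := sup'_le univ_nonempty (fun S => surplus (V S) (y z)) fun S _ => hzε S
  have hxS := le_sup' (fun S => surplus (V S) (y x)) (mem_univ S)
  linarith

/-- **Scarf's theorem** on the core of a balanced game. -/
theorem exists_mem_grand_forall_notMem_interior (hV : IsNTUGame V) (hbal : IsBalanced V) :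
    ∃ u ∈ V (Coalition.grand N), ∀ S, u ∉ interior (V S) := by
  obtain ⟨u, hu⟩ := hV.exists_surplus_le_surplus_grand hbal
  exact ⟨_, hV.le_surplus_iff.1 le_rfl, fun S => hV.notMem_interior_of_surplus_le (hu S)⟩

end IsNTUGame

end Game

theorem IsBalancingWeight.sum_smul_sum {N M : Type*} [Fintype N] [AddCommGroup M] [Module ℝ M]
    {w : Coalition N → ℝ} (hw : IsBalancingWeight w) (f : N → M) :
    ∑ S, w S • ∑ i ∈ S.1, f i = ∑ i, f i := by
  classical
  calc
    ∑ S, w S • ∑ i ∈ S.1, f i = ∑ S, ∑ i ∈ S.1, w S • f i := by simp only [smul_sum]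
    _ = ∑ i, ∑ S : Coalition N with i ∈ S.1, w S • f i := sum_comm' (by simp)
    _ = ∑ i, f i := by simp only [← sum_smul, hw.sum_eq_one, one_smul]

theorem nonpos_of_forall_smul_add_le {ι : Type*} {d p q : ι → ℝ}
    (h : ∀ c : ℝ, 0 ≤ c → c • d + p ≤ q) : d ≤ 0 := by
  intro i
  by_contra! hi
  obtain ⟨n, hn⟩ := exists_nat_gt ((q i - p i) / d i)
  rw [div_lt_iff₀ hi] at hn
  have := h n n.cast_nonneg i
  simp only [Pi.add_apply, Pi.smul_apply, smul_eq_mul] at this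
  linarith

section LinearProduction

open Matrix

variable {K J N : Type*} [Fintype J] {A : K → J → ℝ} {b : N → K → ℝ} {v : N → J → ℝ}
  {S T : Finset N}

theorem mem_designSpace {x : J → ℝ} :
    x ∈ designSpace A b S ↔ 0 ≤ x ∧ Matrix.of A *ᵥ x ≤ ∑ i ∈ S, b i := by
  simp [designSpace, Pi.le_def, mulVec, dotProduct]

theorem mem_utilitySpace {u : N → ℝ} :
    u ∈ utilitySpace A b v S ↔ ∃ x ∈ designSpace A b S, ∀ i ∈ S, u i ≤ v i ⬝ᵥ x :=
  Iff.rfl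

theorem isClosed_designSpace : IsClosed (designSpace A b S) := by
  simp only [designSpace, Set.ofPred_and, Set.ofPred_forall]
  refine (isClosed_iInter fun j => ?_).inter (isClosed_iInter fun k => ?_)
  · exact isClosed_le continuous_const (continuous_apply j)
  · exact isClosed_le (by fun_prop) continuous_const

theorem convex_designSpace : Convex ℝ (designSpace A b S) := by
  have : designSpace A b S = Set.Ici 0 ∩ (Matrix.of A).mulVecLin ⁻¹' Set.Iic (∑ i ∈ S, b i) := by
    ext x
    simp [mem_designSpace]
  rw [this]
  exact (convex_Ici 0).inter ((convex_Iic _).linear_preimage _)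

theorem smul_add_mem_designSpace {d x y : J → ℝ}
    (hd : ∀ c : ℝ, 0 ≤ c → c • d + x ∈ designSpace A b S) (hy : y ∈ designSpace A b T) {c : ℝ}
    (hc : 0 ≤ c) : c • d + y ∈ designSpace A b T := by
  simp only [mem_designSpace, mulVec_add, mulVec_smul] at hd hy ⊢
  have hd0 : 0 ≤ d := neg_nonpos.1 <| nonpos_of_forall_smul_add_le (p := -x) (q := 0) fun c hc => by
    rw [smul_neg, ← neg_add]
    exact neg_nonpos.2 (hd c hc).1
  have hAd : Matrix.of A *ᵥ d ≤ 0 := nonpos_of_forall_smul_add_le fun c hc => (hd c hc).2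
  exact ⟨add_nonneg (smul_nonneg hc hd0) hy.1,
    (add_le_add_left (smul_nonpos_of_nonneg_of_nonpos hc hAd) _).trans (by simpa using hy.2)⟩

open Filter in
theorem isBounded_designSpace (hne : (designSpace A b T).Nonempty)
    (hbd : Bornology.IsBounded (designSpace A b T)) : Bornology.IsBounded (designSpace A b S) := by
  rw [isBounded_iff_asymptoticCone_subset_singleton] at hbd ⊢
  intro d hd
  obtain ⟨x, hx⟩ := asymptoticCone_nonempty.1 ⟨d, hd⟩
  obtain ⟨y, hy⟩ := hne
  refine hbd (Frequently.mono ?_ fun _ => id)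
  refine ((tendsto_id.atTop_smul_const_tendsto_asymptoticNhds d).asymptoticNhds_vadd_const
    y).frequently ((eventually_ge_atTop 0).mono fun c hc => ?_).frequently
  exact smul_add_mem_designSpace (x := x)
    (fun c hc => convex_designSpace.smul_vadd_mem_of_isClosed_of_mem_asymptoticCone
      isClosed_designSpace hc hd hx) hy hc

theorem designSpace_nonempty (hne : ∀ i, (designSpace A b {i}).Nonempty) (S : Finset N) :
    (designSpace A b S).Nonempty := by
  choose x hx using hne
  simp only [mem_designSpace, sum_singleton] at hx
  refine ⟨∑ i ∈ S, x i, mem_designSpace.2 ⟨sum_nonneg fun i _ => (hx i).1, ?_⟩⟩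
  rw [mulVec_sum]
  exact sum_le_sum fun i _ => (hx i).2

theorem isClosed_utilitySpace (hbd : Bornology.IsBounded (designSpace A b S)) :
    IsClosed (utilitySpace A b v S) := by
  have := isCompact_iff_compactSpace.1 (Metric.isCompact_of_isClosed_isBounded
    isClosed_designSpace hbd)
  have : utilitySpace A b v S = Prod.snd ''
      {p : designSpace A b S × (N → ℝ) | ∀ i ∈ S, p.2 i ≤ v i ⬝ᵥ p.1.1} := by
    ext u
    simp [mem_utilitySpace]
  rw [this]
  refine isClosedMap_snd_of_compactSpace _ ?_
  simp only [Set.ofPred_forall]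
  exact isClosed_iInter fun i => isClosed_iInter fun _ => isClosed_le (by fun_prop) (by fun_prop)

theorem bddAbove_utilitySpace (hbd : Bornology.IsBounded (designSpace A b S)) {i : N}
    (hi : i ∈ S) : BddAbove ((· i) '' utilitySpace A b v S) := by
  obtain ⟨B, hB⟩ := (Metric.isCompact_of_isClosed_isBounded isClosed_designSpace
    hbd).bddAbove_image (f := (v i ⬝ᵥ ·)) (by fun_prop)
  refine ⟨B, ?_⟩
  rintro - ⟨u, ⟨x, hx, hux⟩, rfl⟩
  exact (hux i hi).trans (hB ⟨x, hx, rfl⟩)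

theorem isNTUGame_utilitySpace (hne : ∀ i, (designSpace A b {i}).Nonempty)
    (hbd : Bornology.IsBounded (designSpace A b T)) :
    IsNTUGame fun S : Coalition N => utilitySpace A b v S.1 where
  nonempty S := (designSpace_nonempty hne S.1).elim fun x hx =>
    ⟨fun i => v i ⬝ᵥ x, x, hx, fun _ _ => le_rfl⟩
  isClosed _ := isClosed_utilitySpace (isBounded_designSpace (designSpace_nonempty hne T) hbd)
  mem_of_le _ _ := fun ⟨x, hx, hux⟩ _ hu' => ⟨x, hx, fun i hi => (hu' i hi).trans (hux i hi)⟩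
  bddAbove _ _ hi :=
    bddAbove_utilitySpace (isBounded_designSpace (designSpace_nonempty hne T) hbd) hi

variable [Fintype N]

theorem IsBalancingWeight.sum_smul_mem_designSpace {w : Coalition N → ℝ}
    (hw : IsBalancingWeight w) {x : Coalition N → J → ℝ}
    (hx : ∀ S, x S ∈ designSpace A b S.1) : ∑ S, w S • x S ∈ designSpace A b univ := by
  simp only [mem_designSpace] at hx ⊢
  refine ⟨sum_nonneg fun S _ => smul_nonneg (hw.nonneg S) (hx S).1, ?_⟩
  rw [mulVec_sum, ← hw.sum_smul_sum]
  refine sum_le_sum fun S _ => ?_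
  rw [mulVec_smul]
  exact smul_le_smul_of_nonneg_left (hx S).2 (hw.nonneg S)

theorem isBalanced_utilitySpace [Nonempty N]
    (hne : ∀ S : Coalition N, (designSpace A b S.1).Nonempty)
    (hv : ∀ i, ∀ S : Coalition N, i ∉ S.1 → ∀ x ∈ designSpace A b S.1, 0 ≤ v i ⬝ᵥ x) :
    IsBalanced fun S : Coalition N => utilitySpace A b v S.1 := by
  classical
  intro w hw u hu
  have hdesign : ∀ S : Coalition N, ∃ x ∈ designSpace A b S.1,
      0 < w S → ∀ i ∈ S.1, u i ≤ v i ⬝ᵥ x := fun S => by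
    obtain hwS | hwS := (hw.nonneg S).eq_or_lt
    · exact (hne S).imp fun x hx => ⟨hx, fun h => absurd hwS h.ne⟩
    · exact (hu S hwS).imp fun x hx => ⟨hx.1, fun _ => hx.2⟩
  choose x hx hux using hdesign
  refine ⟨∑ S, w S • x S, hw.sum_smul_mem_designSpace hx, fun i _ => ?_⟩
  calc u i = ∑ S : Coalition N with i ∈ S.1, w S * u i := by
        rw [← sum_mul, hw.sum_eq_one, one_mul]
    _ ≤ ∑ S : Coalition N with i ∈ S.1, w S * v i ⬝ᵥ x S := sum_le_sum fun S hS => by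
        obtain hwS | hwS := (hw.nonneg S).eq_or_lt
        · simp [← hwS]
        · exact mul_le_mul_of_nonneg_left (hux S hwS i (mem_filter.1 hS).2) hwS.le
    _ ≤ ∑ S, w S * v i ⬝ᵥ x S := sum_le_sum_of_subset_of_nonneg (filter_subset _ _) fun S _ hS =>
        mul_nonneg (hw.nonneg S) (hv i S (by simpa using hS) _ (hx S))
    _ = v i ⬝ᵥ ∑ S, w S • x S := by simp only [dotProduct_sum, dotProduct_smul, smul_eq_mul]

end LinearProduction

theorem ntulp_core_nonempty_general {K J N : Type*} [Fintype J] [Fintype N] [Nonempty N]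
    (A : K → J → ℝ) (b : N → K → ℝ) (v : N → J → ℝ)
    (hne : ∀ i, (designSpace A b {i}).Nonempty)
    {T : Finset N} (hbd : Bornology.IsBounded (designSpace A b T))
    (hv : ∀ i, ∀ S : Finset N, S.Nonempty → i ∉ S → ∀ x ∈ designSpace A b S,
      0 ≤ ∑ j, v i j * x j) :
    (core A b v).Nonempty := by
  obtain ⟨u, hu, hcore⟩ := (isNTUGame_utilitySpace hne hbd).exists_mem_grand_forall_notMem_interior
    (isBalanced_utilitySpace (v := v) (fun S => designSpace_nonempty hne S.1)
      fun i S => hv i S.1 S.2)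
  refine ⟨u, hu, ?_⟩
  simp only [Set.mem_iUnion, not_exists]
  exact fun S hS => hcore ⟨S, hS⟩

/-- If every `X({i})` is nonempty and bounded, and every valuation vector `vⁱ` lies in
the dual cone of `X(S)` for every nonempty coalition `S`, then the core is nonempty. -/
theorem ntulp_core_nonempty {K J N : Type*} [Fintype J] [Fintype K] [Fintype N]
    [Nonempty N]
    (A : K → J → ℝ) (b : N → K → ℝ) (v : N → J → ℝ)
    (hne : ∀ i : N, (designSpace A b {i}).Nonempty)
    (hbd : ∀ i : N, Bornology.IsBounded (designSpace A b {i}))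
    (hv : ∀ i : N, ∀ S : Finset N, S.Nonempty →
      ∀ x ∈ designSpace A b S, 0 ≤ ∑ j, v i j * x j) :
    (core A b v).Nonempty := by
  exact ntulp_core_nonempty_general A b v hne (hbd (Classical.arbitrary N))
    fun i S hS _ => hv i S hS
end

section
/- Consider the NTU LP game with players N = {1, 2, 3}, goods J = {1, 2}, a single resource K = {1}, production matrix A = (1 1), endowments b^1 = b^2 = b^3 = 1, and valuations v^1 = v^2 = (2/3, 1/3)ᵀ and v^3 = (−2/3, 1/3)ᵀ. Then the core of this game is empty: C(N) = ∅. -/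
/-!
Player 3 alone secures `1/3` with the design `(0, 1)`, and players 1 and 2 together secure `4/3`
each with `(2, 0)`. For `i = 1, 2` the identity `vⁱ + v³/3 = 4/9 • (1, 1)` shows that every utility
profile of the grand coalition, whose budget is `3`, satisfies `uᵢ + u₃/3 ≤ 4/3`. Hence `{1, 2}`
blocks every profile with `u₃ > 0`, and `{3}` blocks all the others.
-/

open Finset

section Game

variable {K J N : Type*} [Fintype J] {A : K → J → ℝ} {b : N → K → ℝ} {v : N → J → ℝ}
  {S : Finset N} {u : N → ℝ} {x : J → ℝ}

theorem mem_interior_utilitySpace_of_forall_lt (hx : x ∈ designSpace A b S)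
    (hu : ∀ i ∈ S, u i < ∑ j, v i j * x j) : u ∈ interior (utilitySpace A b v S) :=
  mem_interior_iff_mem_nhds.2 <|
    Filter.mem_of_superset
      (set_pi_mem_nhds S.finite_toSet fun i hi => Iic_mem_nhds (hu i hi))
      fun _ hw => ⟨x, hx, hw⟩

theorem exists_le_of_mem_core [Fintype N] (hu : u ∈ core A b v) (hS : S.Nonempty)
    (hx : x ∈ designSpace A b S) : ∃ i ∈ S, ∑ j, v i j * x j ≤ u i := by
  by_contra! hlt
  exact hu.2 <| Set.mem_biUnion hS (mem_interior_utilitySpace_of_forall_lt hx hlt)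

theorem le_of_mem_core_of_mem_designSpace_singleton [Fintype N] {i : N} (hu : u ∈ core A b v)
    (hx : x ∈ designSpace A b {i}) : ∑ j, v i j * x j ≤ u i := by
  simpa only [Finset.mem_singleton, exists_eq_left] using
    exists_le_of_mem_core hu (Finset.singleton_nonempty i) hx

/-- Weak linear programming duality, with the prices `p` of the resources as dual variables. -/
theorem sum_mul_le_sum_mul_of_mem_utilitySpace [Fintype K] {w : N → ℝ} {p : K → ℝ}
    (hu : u ∈ utilitySpace A b v S) (hw : ∀ i ∈ S, 0 ≤ w i) (hp : ∀ k, 0 ≤ p k)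
    (hp_dual : ∀ j, ∑ i ∈ S, w i * v i j ≤ ∑ k, p k * A k j) :
    ∑ i ∈ S, w i * u i ≤ ∑ k, p k * ∑ i ∈ S, b i k := by
  obtain ⟨x, ⟨hx_nonneg, hx_budget⟩, hux⟩ := hu
  calc
    ∑ i ∈ S, w i * u i ≤ ∑ i ∈ S, w i * ∑ j, v i j * x j := by
      gcongr with i hi
      exacts [hw i hi, hux i hi]
    _ = ∑ j, (∑ i ∈ S, w i * v i j) * x j := by
      simp only [Finset.mul_sum, Finset.sum_mul, mul_assoc]
      exact Finset.sum_comm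
    _ ≤ ∑ j, (∑ k, p k * A k j) * x j := by
      gcongr with j
      exacts [hx_nonneg j, hp_dual j]
    _ = ∑ k, p k * ∑ j, A k j * x j := by
      simp only [Finset.mul_sum, Finset.sum_mul, mul_assoc]
      exact Finset.sum_comm
    _ ≤ ∑ k, p k * ∑ i ∈ S, b i k := by
      gcongr with k
      exacts [hp k, hx_budget k]

theorem add_mul_le_of_mem_utilitySpace [Fintype K] {i l : N} {c : ℝ} {p : K → ℝ}
    (hu : u ∈ utilitySpace A b v S) (hi : i ∈ S) (hl : l ∈ S) (hc : 0 ≤ c) (hp : ∀ k, 0 ≤ p k)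
    (hp_dual : ∀ j, v i j + c * v l j ≤ ∑ k, p k * A k j) :
    u i + c * u l ≤ ∑ k, p k * ∑ i ∈ S, b i k := by
  classical
  have weights_nonneg : 0 ≤ (Pi.single i 1 + Pi.single l c : N → ℝ) :=
    add_nonneg (Pi.single_nonneg.2 zero_le_one) (Pi.single_nonneg.2 hc)
  have sum_weights (f : N → ℝ) :
      ∑ m ∈ S, (Pi.single i 1 + Pi.single l c : N → ℝ) m * f m = f i + c * f l := by
    simp [add_mul, Finset.sum_add_distrib, Pi.single_apply, hi, hl]
  rw [← sum_weights]
  refine sum_mul_le_sum_mul_of_mem_utilitySpace hu (fun m _ => weights_nonneg m) hp fun j => ?_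
  rw [sum_weights (v · j)]
  exact hp_dual j

end Game

/-- The NTU LP game with three players, two goods, a single resource,
`A = (1 1)`, `b¹ = b² = b³ = 1`, `v¹ = v² = (2/3, 1/3)ᵀ`, `v³ = (-2/3, 1/3)ᵀ`
has an empty core. -/
theorem ntulp_example_core_empty :
    core (fun (_ : Fin 1) (_ : Fin 2) => (1 : ℝ))
      (fun (_ : Fin 3) (_ : Fin 1) => (1 : ℝ))
      ![![2/3, 1/3], ![2/3, 1/3], ![-2/3, 1/3]] = ∅ := by
  refine Set.eq_empty_iff_forall_notMem.2 fun u hu => ?_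
  have u₃_ge : 1 / 3 ≤ u 2 := by
    simpa using le_of_mem_core_of_mem_designSpace_singleton (i := 2) (x := ![0, 1]) hu
      (by simp [designSpace, Fin.forall_fin_two])
  obtain ⟨i, hi, design_le⟩ := exists_le_of_mem_core (S := {0, 1}) (x := ![2, 0]) hu (by simp)
    (by simp [designSpace, Fin.forall_fin_two])
  replace hi : i = 0 ∨ i = 1 := by simpa using hi
  have uᵢ_ge : 4 / 3 ≤ u i :=
    design_le.trans' (by rcases hi with rfl | rfl <;> norm_num)
  have uᵢ_add_le : u i + 1 / 3 * u 2 ≤ 4 / 3 :=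
    (add_mul_le_of_mem_utilitySpace (p := fun _ => 4 / 9) hu.1 (Finset.mem_univ i)
      (Finset.mem_univ 2) (by norm_num) (by norm_num)
      (by rcases hi with rfl | rfl <;> simp [Fin.forall_fin_two] <;> norm_num)).trans_eq
      (by norm_num)
  linarith
end
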